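/- arXiv:2010.08922 — 2 statements merged into one kernel-verified Lean document; each statement's English description precedes it below -/
import Mathlib

section
/- Let f be a quadratic polynomial in n variables which has at least one multilinear degree-2 coefficient (i.e., a coefficient of some ξ_i ξ_j with i ≠ j) with absolute value at least r. Then for a uniformly random ξ ∈ {−1,1}^n, Pr(|f(ξ)| < r) ≤ 3/4. -/
open Finset

/-- The real number (`1` or `-1`) associated to a Boolean: a Rademacher value. -/
noncomputable def rad (b : Bool) : ℝ := if b then 1 else -1

/-!
Let `S` be a set of `d` indices. Negating the coordinates of a point `ξ` in the subsets `T` of `S`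
gives `2 ^ d` points of the cube. The alternating sum of the values of `f` at these points is a
mixed difference of order `d`: it kills every monomial with an even exponent at some index of `S`.
When `f` has degree at most `d`, only the multilinear monomial `∏ i ∈ S, ξ i` survives, multiplied
by `2 ^ d`, so at one of these points `|f|` is at least the absolute value of the coefficient of
that monomial. Hence the preimages of `{|f| ≥ r}` under the `2 ^ d` flips cover the cube. They all
have the same size, so `{|f| ≥ r}` has density at least `2 ^ (-d)`.
-/

section MixedDifference

open MvPolynomial

variable {σ R : Type*}

lemma prod_one_sub_neg_one_pow [CommRing R] (S : Finset σ) (m : σ → ℕ) :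
    ∏ i ∈ S, (1 - (-1 : R) ^ m i) = if ∀ i ∈ S, Odd (m i) then 2 ^ #S else 0 := by
  split_ifs with hodd
  · refine prod_eq_pow_card fun i hi => ?_
    rw [(hodd i hi).neg_one_pow, sub_neg_eq_add, one_add_one_eq_two]
  · push Not at hodd
    obtain ⟨i, hi, heven⟩ := hodd
    exact prod_eq_zero hi (by simp [(Nat.not_odd_iff_even.1 heven).neg_one_pow])

lemma eq_sum_single_one_of_degree_le_card {S : Finset σ} {m : σ →₀ ℕ} (hdeg : m.degree ≤ #S)
    (hm : ∀ i ∈ S, m i ≠ 0) : m = ∑ i ∈ S, Finsupp.single i 1 := by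
  classical
  have hle : ∑ i ∈ S, Finsupp.single i 1 ≤ m := by
    intro i
    by_cases hi : i ∈ S
    · simpa [Finsupp.finsetSum_apply, Finsupp.single_apply, hi, Nat.one_le_iff_ne_zero]
        using hm i hi
    · simp [Finsupp.finsetSum_apply, Finsupp.single_apply, hi]
  obtain ⟨k, rfl⟩ := exists_add_of_le hle
  have hk : k.degree = 0 := by simpa using hdeg
  rw [(Finsupp.degree_eq_zero_iff k).1 hk, add_zero]

lemma eval_monomial_sum_single_one [CommSemiring R] (S : Finset σ) (x : σ → R) (c : R) :
    eval x (monomial (∑ i ∈ S, Finsupp.single i 1) c) = c * ∏ i ∈ S, x i := by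
  rw [eval_monomial, ← Finsupp.prod_finsetSum_index (by simp) (by simp [pow_add])]
  simp

variable [DecidableEq σ]

/-- The vector `x` with its coordinates in `T` negated. The values of a polynomial at these vectors,
for `T ⊆ S`, are the terms of its mixed difference in the directions of `S`. -/
def negOn [Neg R] (T : Finset σ) (x : σ → R) : σ → R := T.piecewise (-x) x

lemma eval_negOn_monomial [CommRing R] (T : Finset σ) (x : σ → R) (m : σ →₀ ℕ) (c : R) :
    eval (negOn T x) (monomial m c) = (∏ i ∈ T, (-1) ^ m i) * eval x (monomial m c) := by
  have hneg : negOn T x = T.piecewise (-1 : σ → R) (1 : σ → R) * x := by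
    ext i
    by_cases hi : i ∈ T <;> simp [negOn, hi]
  have hsign : (m.prod fun i e => T.piecewise (-1 : σ → R) (1 : σ → R) i ^ e) =
      ∏ i ∈ T, (-1) ^ m i := by
    rw [m.prod_of_support_subset (s := m.support ∪ T) subset_union_left _ (by simp),
      ← prod_subset (subset_union_right : T ⊆ m.support ∪ T) fun i _ hi => by simp [hi]]
    exact prod_congr rfl fun i hi => by simp [hi]
  rw [eval_monomial, eval_monomial, hneg]
  simp only [Pi.mul_apply, mul_pow, Finsupp.prod_mul]
  rw [hsign, mul_left_comm]

lemma sum_powerset_neg_one_pow_card_mul_eval_negOn_monomial [CommRing R] (S : Finset σ)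
    (x : σ → R) (m : σ →₀ ℕ) (c : R) :
    ∑ T ∈ S.powerset, (-1) ^ #T * eval (negOn T x) (monomial m c) =
      if ∀ i ∈ S, Odd (m i) then 2 ^ #S * eval x (monomial m c) else 0 := by
  have hsum : ∑ T ∈ S.powerset, (-1) ^ #T * ∏ i ∈ T, (-1 : R) ^ m i =
      ∏ i ∈ S, (1 - (-1 : R) ^ m i) := by
    simp only [sub_eq_add_neg, prod_one_add, prod_neg]
  simp only [eval_negOn_monomial, ← mul_assoc, ← sum_mul]
  rw [hsum, prod_one_sub_neg_one_pow, ite_mul, zero_mul]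

lemma sum_powerset_neg_one_pow_card_mul_eval_negOn [CommRing R] {f : MvPolynomial σ R}
    {S : Finset σ} (hdeg : f.totalDegree ≤ #S) (x : σ → R) :
    ∑ T ∈ S.powerset, (-1) ^ #T * eval (negOn T x) f =
      2 ^ #S * (f.coeff (∑ i ∈ S, Finsupp.single i 1) * ∏ i ∈ S, x i) := by
  set e : σ →₀ ℕ := ∑ i ∈ S, Finsupp.single i 1 with he
  have hodd : ∀ m ∈ f.support, (∀ i ∈ S, Odd (m i)) ↔ m = e := by
    refine fun m hm => ⟨fun h => ?_, ?_⟩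
    · exact eq_sum_single_one_of_degree_le_card ((le_totalDegree hm).trans hdeg)
        fun i hi => (h i hi).pos.ne'
    · rintro rfl i hi
      simp [he, Finsupp.finsetSum_apply, Finsupp.single_apply, hi]
  calc
    _ = ∑ m ∈ f.support, ∑ T ∈ S.powerset,
        (-1) ^ #T * eval (negOn T x) (monomial m (f.coeff m)) := by
      rw [sum_comm]
      refine sum_congr rfl fun T _ => ?_
      rw [← mul_sum, ← map_sum, ← f.as_sum]
    _ = ∑ m ∈ f.support, if m = e then 2 ^ #S * eval x (monomial m (f.coeff m)) else 0 := by
      refine sum_congr rfl fun m hm => ?_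
      rw [sum_powerset_neg_one_pow_card_mul_eval_negOn_monomial, if_congr (hodd m hm) rfl rfl]
    _ = 2 ^ #S * eval x (monomial e (f.coeff e)) := by
      rw [sum_ite_eq', ite_eq_left_iff]
      intro h
      simp [notMem_support_iff.1 h]
    _ = _ := by rw [he, eval_monomial_sum_single_one]

lemma exists_abs_coeff_mul_prod_le_abs_eval_negOn [CommRing R] [LinearOrder R]
    [IsStrictOrderedRing R] {f : MvPolynomial σ R} {S : Finset σ} (hdeg : f.totalDegree ≤ #S)
    (x : σ → R) :
    ∃ T ⊆ S, |f.coeff (∑ i ∈ S, Finsupp.single i 1) * ∏ i ∈ S, x i| ≤ |eval (negOn T x) f| := by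
  set c := f.coeff (∑ i ∈ S, Finsupp.single i 1) * ∏ i ∈ S, x i
  have hsum : ∑ _T ∈ S.powerset, |c| ≤ ∑ T ∈ S.powerset, |eval (negOn T x) f| := calc
    _ = |∑ T ∈ S.powerset, (-1) ^ #T * eval (negOn T x) f| := by
      rw [sum_powerset_neg_one_pow_card_mul_eval_negOn hdeg, abs_mul]
      simp
    _ ≤ ∑ T ∈ S.powerset, |(-1) ^ #T * eval (negOn T x) f| := abs_sum_le_sum_abs _ _
    _ = _ := by simp [abs_mul]
  obtain ⟨T, hT, hle⟩ := exists_le_of_sum_le (powerset_nonempty S) hsum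
  exact ⟨T, mem_powerset.1 hT, hle⟩

end MixedDifference

section BooleanCube

lemma abs_rad (b : Bool) : |rad b| = 1 := by
  cases b <;> simp [rad]

lemma rad_not (b : Bool) : rad (!b) = -rad b := by
  cases b <;> simp [rad]

variable {σ : Type*} [DecidableEq σ]

/-- The point `ξ` of the Boolean cube with its bits in `T` flipped, so that `flipOn T` corresponds
to `negOn T` on sign vectors. -/
def flipOn (T : Finset σ) (ξ : σ → Bool) : σ → Bool := T.piecewise ξᶜ ξ

lemma flipOn_involutive (T : Finset σ) : Function.Involutive (flipOn T) := by
  intro ξ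
  ext i
  by_cases hi : i ∈ T <;> simp [flipOn, hi]

lemma rad_flipOn (T : Finset σ) (ξ : σ → Bool) :
    (fun i => rad (flipOn T ξ i)) = negOn T fun i => rad (ξ i) := by
  ext i
  by_cases hi : i ∈ T <;> simp [flipOn, negOn, hi, rad_not]

lemma exists_abs_coeff_le_abs_eval_rad_flipOn {f : MvPolynomial σ ℝ} {S : Finset σ}
    (hdeg : f.totalDegree ≤ #S) (ξ : σ → Bool) :
    ∃ T ⊆ S, |f.coeff (∑ i ∈ S, Finsupp.single i 1)| ≤
      |MvPolynomial.eval (fun i => rad (flipOn T ξ i)) f| := by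
  simpa [rad_flipOn, abs_mul, abs_prod, abs_rad] using
    exists_abs_coeff_mul_prod_le_abs_eval_negOn hdeg fun i => rad (ξ i)

end BooleanCube

lemma card_le_card_mul_card_of_forall_exists_mem {α β ι : Type*} [Fintype α] {B : Finset β}
    {I : Finset ι} {g : ι → α → β} (hg : ∀ i ∈ I, Function.Injective (g i))
    (hB : ∀ a, ∃ i ∈ I, g i a ∈ B) : Fintype.card α ≤ #I * #B := by
  classical
  have hcover : (univ : Finset α) = I.biUnion fun i => {a | g i a ∈ B} := by
    ext a
    simpa using hB a
  rw [← card_univ, hcover]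
  refine card_biUnion_le_card_mul _ _ _ fun i hi => ?_
  exact card_le_card_of_injOn (g i) (fun a ha => by simpa using ha) (hg i hi).injOn

lemma two_pow_card_le_mul_card_le_abs_eval_rad {σ : Type*} [Fintype σ] [DecidableEq σ]
    {f : MvPolynomial σ ℝ} {r : ℝ} {S : Finset σ} (hdeg : f.totalDegree ≤ #S)
    (hcoeff : r ≤ |f.coeff (∑ i ∈ S, Finsupp.single i 1)|) :
    2 ^ Fintype.card σ ≤
      2 ^ #S * #{ξ : σ → Bool | r ≤ |MvPolynomial.eval (fun i => rad (ξ i)) f|} := by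
  rw [← card_powerset, ← Fintype.card_bool, ← Fintype.card_fun]
  refine card_le_card_mul_card_of_forall_exists_mem
    (fun T _ => (flipOn_involutive T).injective) fun ξ => ?_
  obtain ⟨T, hT, hle⟩ := exists_abs_coeff_le_abs_eval_rad_flipOn hdeg ξ
  exact ⟨T, mem_powerset.2 hT, mem_filter.2 ⟨mem_univ _, hcoeff.trans hle⟩⟩

theorem quadratic_nondegenerate_general {σ : Type*} [Fintype σ] [DecidableEq σ]
    (f : MvPolynomial σ ℝ) (r : ℝ) (S : Finset σ) (hdeg : f.totalDegree ≤ #S)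
    (hcoeff : r ≤ |f.coeff (∑ i ∈ S, Finsupp.single i 1)|) :
    (#{ξ : σ → Bool | |MvPolynomial.eval (fun i => rad (ξ i)) f| < r} : ℝ) / 2 ^ Fintype.card σ ≤
      1 - 1 / 2 ^ #S := by
  have hlarge : (2 : ℝ) ^ Fintype.card σ ≤
      2 ^ #S * #{ξ : σ → Bool | r ≤ |MvPolynomial.eval (fun i => rad (ξ i)) f|} :=
    mod_cast two_pow_card_le_mul_card_le_abs_eval_rad hdeg hcoeff
  have hsplit : (#{ξ : σ → Bool | |MvPolynomial.eval (fun i => rad (ξ i)) f| < r} : ℝ) +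
      #{ξ : σ → Bool | r ≤ |MvPolynomial.eval (fun i => rad (ξ i)) f|} = 2 ^ Fintype.card σ := by
    have h := card_filter_add_card_filter_not (s := (univ : Finset (σ → Bool)))
      fun ξ => |MvPolynomial.eval (fun i => rad (ξ i)) f| < r
    simp only [not_lt, card_univ, Fintype.card_fun, Fintype.card_bool] at h
    exact_mod_cast h
  rw [eq_sub_of_add_eq hsplit, sub_div, div_self (by positivity)]
  gcongr 1 - ?_
  rwa [div_le_div_iff₀ (by positivity) (by positivity), one_mul, mul_comm]

open Classical in
/-- If a quadratic polynomial `f` in `n` variables has at least one multilinear degree-2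
coefficient (the coefficient of `ξ_i ξ_j` with `i ≠ j`) of absolute value at least `r`,
then for a uniformly random `ξ ∈ {-1,1}^n` we have `Pr(|f(ξ)| < r) ≤ 3/4`. -/
theorem quadratic_nondegenerate (n : ℕ) (f : MvPolynomial (Fin n) ℝ) (r : ℝ)
    (hdeg : f.totalDegree ≤ 2)
    (hcoeff : ∃ i j : Fin n, i ≠ j ∧
      r ≤ |f.coeff (Finsupp.single i 1 + Finsupp.single j 1)|) :
    ((univ.filter fun ξ : Fin n → Bool =>
        |MvPolynomial.eval (fun i => rad (ξ i)) f| < r).card : ℝ) / 2 ^ n ≤ 3 / 4 := by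
  obtain ⟨i, j, hij, hr⟩ := hcoeff
  have h := quadratic_nondegenerate_general f r {i, j} (by rwa [card_pair hij])
    (by rwa [sum_pair hij])
  rw [card_pair hij, Fintype.card_fin] at h
  exact h.trans_eq (by norm_num)
end

section
/- Let M be a symmetric (n−1)×(n−1) matrix with ±1 entries, let A,B ⊆ {1,…,n−1} with |A| = |B| be such that M[A,B] is λ-heavy for some λ > 0, and let I ⊆ {1,…,n−1} \ B be nonempty. Form a random symmetric n×n matrix M_n by appending to M a new row and column whose entries are independent Rademacher random variables. Then with probability at least 1 − 2^{−|I|} there exists i ∈ I such that M_n[A ∪ {n}, B ∪ {i}] is λ-heavy. -/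
/-!
Write `x_j` for the new entry `M_n(n, j)`. The permanent of `M_n[A ∪ {n}, B ∪ {i}]` is affine in
`x_i` with leading coefficient `per M[A,B]`, and besides `x_i` it involves only the new entries
`x_b` with `b ∈ B`. So if two outcomes agree in the columns of `B` and differ in `x_i`, the two
permanents are `2 |per M[A,B]| ≥ 2λ` apart and cannot both be below `λ` in absolute value.

Call an outcome bad if no `i ∈ I` works. Since `I` is disjoint from `B`, two bad outcomes that agree
outside the entries `x_i`, `i ∈ I`, are equal. Hence a bad outcome is determined by the
remaining entries, and the bad outcomes have density at most `2 ^ (-|I|)`.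
-/

open Finset

/-- The permanent of the submatrix of `M` with row set `A` and column set `B`,
defined as a sum over all bijections between `A` and `B` (it equals `0` if
`A.card ≠ B.card`). Since the permanent is invariant under row and column
permutations, this faithfully represents `per M[A,B]`. -/
noncomputable def permOn {m n : ℕ} (M : Matrix (Fin m) (Fin n) ℝ)
    (A : Finset (Fin m)) (B : Finset (Fin n)) : ℝ :=
  ∑ σ : {x // x ∈ A} ≃ {y // y ∈ B}, ∏ i : {x // x ∈ A}, M i.1 (σ i).1

/-- The random symmetric extension of a fixed `n' × n'` matrix `M` to an `n × n` matrix: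
the top-left `n' × n'` block is `M`, and the remaining entries are Rademacher values
determined symmetrically by the Boolean data `ω`. As `ω` ranges uniformly over all Boolean
data, the new entries (on and above the diagonal) are i.i.d. Rademacher random variables. -/
noncomputable def extSym {n' : ℕ} (n : ℕ) (M : Matrix (Fin n') (Fin n') ℝ)
    (ω : Fin n → Fin n → Bool) : Matrix (Fin n) (Fin n) ℝ :=
  fun i j =>
    if h : (i : ℕ) < n' ∧ (j : ℕ) < n' then M ⟨i, h.1⟩ ⟨j, h.2⟩
    else if i ≤ j then rad (ω i j) else rad (ω j i)

open Classical in
/-- The probability of the event `P` for the random symmetric extension of `M` to size `n`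
(i.e. conditionally on the outcome `M` for the top-left block). -/
noncomputable def probExt {n' : ℕ} (n : ℕ) (M : Matrix (Fin n') (Fin n') ℝ)
    (P : Matrix (Fin n) (Fin n) ℝ → Prop) : ℝ :=
  ((univ.filter fun ω : Fin n → Fin n → Bool => P (extSym n M ω)).card : ℝ) / 2 ^ (n * n)

lemma card_mul_card_pow_le_of_eqOn_compl {α β : Type*} [Fintype α] [Fintype β]
    (S : Finset (α → β)) (J : Finset α)
    (hS : ∀ f ∈ S, ∀ g ∈ S, Set.EqOn f g (J : Set α)ᶜ → f = g) :
    #S * Fintype.card β ^ #J ≤ Fintype.card β ^ Fintype.card α := by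
  classical
  have hinj : Set.InjOn (Jᶜ.restrict (π := fun _ => β)) S := fun f hf g hg hfg =>
    hS f hf g hg fun a ha => congrFun hfg ⟨a, mem_compl.mpr ha⟩
  have hcard : #S ≤ Fintype.card β ^ #Jᶜ := by
    rw [← card_image_of_injOn hinj]
    exact (card_le_univ _).trans_eq (by rw [Fintype.card_fun, Fintype.card_coe])
  calc #S * Fintype.card β ^ #J
      ≤ Fintype.card β ^ #Jᶜ * Fintype.card β ^ #J := Nat.mul_le_mul_right _ hcard
    _ = Fintype.card β ^ Fintype.card α := by rw [← pow_add, card_compl_add_card]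

lemma mem_range_optionCongr_iff {α β : Type*} {σ : Option α ≃ Option β} :
    σ ∈ Set.range (Equiv.optionCongr : (α ≃ β) → (Option α ≃ Option β)) ↔ σ none = none := by
  refine ⟨?_, fun hnone => ⟨Equiv.removeNone σ, ?_⟩⟩
  · rintro ⟨τ, rfl⟩
    rfl
  · ext1 x
    cases x with
    | none => exact hnone.symm
    | some x =>
      have hsome : σ (some x) ≠ none := hnone ▸ σ.injective.ne (Option.some_ne_none x)
      exact Equiv.removeNone_some σ (Option.ne_none_iff_exists'.mp hsome)

lemma sum_equiv_option_of_apply_none_ne {α β R : Type*} [Fintype α] [Fintype β] [DecidableEq α]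
    [DecidableEq β] [AddCommMonoid R] (F : (Option α ≃ Option β) → R)
    (hF : ∀ σ, σ none ≠ none → F σ = 0) :
    ∑ σ, F σ = ∑ τ : α ≃ β, F (Equiv.optionCongr τ) :=
  (Fintype.sum_of_injective Equiv.optionCongr Equiv.optionCongr_injective _ F
    (fun σ hσ => hF σ (mt mem_range_optionCongr_iff.mpr hσ)) fun _ => rfl).symm

section Permanent

variable {m n : ℕ}

lemma permOn_eq_sum_equiv {α β : Type*} [Fintype α] [Fintype β] [DecidableEq α] [DecidableEq β]
    (N : Matrix (Fin m) (Fin n) ℝ) {A : Finset (Fin m)} {B : Finset (Fin n)}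
    (e : α ≃ {x // x ∈ A}) (f : β ≃ {y // y ∈ B}) :
    permOn N A B = ∑ τ : α ≃ β, ∏ x, N (e x) (f (τ x)) := by
  refine Fintype.sum_equiv (Equiv.equivCongr e.symm f.symm) _ _ fun σ => ?_
  refine Fintype.prod_equiv e.symm _ _ fun i => ?_
  simp [Equiv.equivCongr]

lemma permOn_map {k l : ℕ} (N : Matrix (Fin m) (Fin n) ℝ) (A : Finset (Fin k))
    (B : Finset (Fin l)) (f : Fin k ↪ Fin m) (g : Fin l ↪ Fin n) :
    permOn N (A.map f) (B.map g) = permOn (N.submatrix f g) A B :=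
  permOn_eq_sum_equiv N (A.equivMap f) (B.equivMap g)

lemma permOn_insert_insert_sub_permOn {N N' : Matrix (Fin m) (Fin n) ℝ} {A : Finset (Fin m)}
    {B : Finset (Fin n)} {a : Fin m} {b : Fin n} (ha : a ∉ A) (hb : b ∉ B)
    (hcol : ∀ x ∈ A, ∀ y ∈ insert b B, N x y = N' x y) (hrow : ∀ y ∈ B, N a y = N' a y) :
    permOn N (insert a A) (insert b B) - permOn N' (insert a A) (insert b B) =
      (N a b - N' a b) * permOn N A B := by
  let e := (subtypeInsertEquivOption ha).symm
  let f := (subtypeInsertEquivOption hb).symm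
  have hcol' (x : {x // x ∈ A}) (y : Option {y // y ∈ B}) :
      N (e (some x)) (f y) = N' (e (some x)) (f y) := hcol x x.2 _ (f y).2
  rw [permOn_eq_sum_equiv N e f, permOn_eq_sum_equiv N' e f, ← sum_sub_distrib,
    sum_equiv_option_of_apply_none_ne]
  · rw [permOn, mul_sum]
    refine sum_congr rfl fun τ _ => ?_
    simp only [Fintype.prod_option, ← hcol', ← sub_mul]
    rfl
  · -- a bijection that does not send `a` to `b` uses no entry where `N` and `N'` differ
    intro σ hσ
    obtain ⟨y, hy⟩ := Option.ne_none_iff_exists'.mp hσ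
    have hnone : N (e none) (f (σ none)) = N' (e none) (f (σ none)) := by
      rw [hy]
      exact hrow y y.2
    simp only [Fintype.prod_option, hnone, hcol', sub_self]

end Permanent

lemma abs_rad_sub_rad {u v : Bool} (huv : u ≠ v) : |rad u - rad v| = 2 := by
  cases u <;> cases v <;> first | exact absurd rfl huv | norm_num [rad]

section Extension

variable {n : ℕ} (M : Matrix (Fin n) (Fin n) ℝ) (ω : Fin (n + 1) → Fin (n + 1) → Bool)

lemma extSym_castSucc_castSucc (i j : Fin n) :
    extSym (n + 1) M ω i.castSucc j.castSucc = M i j := by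
  simp [extSym]

lemma extSym_last_castSucc (j : Fin n) :
    extSym (n + 1) M ω (Fin.last n) j.castSucc = rad (ω j.castSucc (Fin.last n)) := by
  simp [extSym, (Fin.castSucc_lt_last j).not_ge]

lemma extSym_submatrix_castSuccEmb :
    (extSym (n + 1) M ω).submatrix Fin.castSuccEmb Fin.castSuccEmb = M :=
  Matrix.ext (extSym_castSucc_castSucc M ω)

/-- The positions of `ω` holding the entries of the new row of `extSym (n + 1) M ω` in the columns
of `I`. These are positions in the last column of `ω`, since `extSym` reads `ω` on and above the
diagonal only. -/
def newEntries (I : Finset (Fin n)) : Finset (Fin (n + 1) × Fin (n + 1)) :=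
  I.map Fin.castSuccEmb ×ˢ {Fin.last n}

lemma card_newEntries (I : Finset (Fin n)) : #(newEntries I) = #I := by
  simp [newEntries]

lemma castSucc_last_mem_newEntries {I : Finset (Fin n)} {j : Fin n} :
    (j.castSucc, Fin.last n) ∈ newEntries I ↔ j ∈ I := by
  simp [newEntries]

/-- The permanent `per N[A ∪ {n}, B ∪ {i}]` of the theorem. The paper's `n`, the new index, is
`Fin.last n` here, and `A`, `B`, `i` are moved to `Fin (n + 1)` along `Fin.castSucc`. -/
noncomputable def borderedPerm (N : Matrix (Fin (n + 1)) (Fin (n + 1)) ℝ) (A B : Finset (Fin n))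
    (i : Fin n) : ℝ :=
  permOn N (insert (Fin.last n) (A.map Fin.castSuccEmb))
    (insert i.castSucc (B.map Fin.castSuccEmb))

variable {M ω}

lemma borderedPerm_extSym_sub_borderedPerm_extSym {ω' : Fin (n + 1) → Fin (n + 1) → Bool}
    (A : Finset (Fin n)) {B : Finset (Fin n)} {i : Fin n} (hi : i ∉ B)
    (hB : ∀ b ∈ B, ω b.castSucc (Fin.last n) = ω' b.castSucc (Fin.last n)) :
    borderedPerm (extSym (n + 1) M ω) A B i - borderedPerm (extSym (n + 1) M ω') A B i =
      (rad (ω i.castSucc (Fin.last n)) - rad (ω' i.castSucc (Fin.last n))) * permOn M A B := by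
  rw [borderedPerm, borderedPerm, permOn_insert_insert_sub_permOn, permOn_map,
    extSym_submatrix_castSuccEmb, extSym_last_castSucc, extSym_last_castSucc]
  · simp [Fin.castSucc_ne_last]
  · simpa using hi
  · simp [extSym_castSucc_castSucc]
  · simpa [extSym_last_castSucc] using fun b hb => congrArg rad (hB b hb)

lemma eq_of_forall_abs_borderedPerm_lt {ω' : Fin (n + 1) → Fin (n + 1) → Bool}
    {A B I : Finset (Fin n)} {lam : ℝ} (hheavy : lam ≤ |permOn M A B|) (hIB : Disjoint I B)
    (hω : ∀ i ∈ I, |borderedPerm (extSym (n + 1) M ω) A B i| < lam)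
    (hω' : ∀ i ∈ I, |borderedPerm (extSym (n + 1) M ω') A B i| < lam)
    (hagree : ∀ a b, (a, b) ∉ newEntries I → ω a b = ω' a b) : ω = ω' := by
  have hB (b : Fin n) (hb : b ∈ B) : ω b.castSucc (Fin.last n) = ω' b.castSucc (Fin.last n) :=
    hagree _ _ (mt castSucc_last_mem_newEntries.mp (disjoint_right.mp hIB hb))
  have hI (i : Fin n) (hi : i ∈ I) :
      ω i.castSucc (Fin.last n) = ω' i.castSucc (Fin.last n) := by
    by_contra hne
    refine lt_irrefl (2 * lam) ?_
    calc 2 * lam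
        ≤ 2 * |permOn M A B| := by gcongr
      _ = |borderedPerm (extSym (n + 1) M ω) A B i - borderedPerm (extSym (n + 1) M ω') A B i| := by
          rw [borderedPerm_extSym_sub_borderedPerm_extSym A (disjoint_left.mp hIB hi) hB,
            abs_mul, abs_rad_sub_rad hne]
      _ ≤ |borderedPerm (extSym (n + 1) M ω) A B i|
            + |borderedPerm (extSym (n + 1) M ω') A B i| := abs_sub _ _
      _ < lam + lam := add_lt_add (hω i hi) (hω' i hi)
      _ = 2 * lam := (two_mul lam).symm
  funext a b
  by_cases hab : (a, b) ∈ newEntries I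
  · obtain ⟨i, hi, rfl, rfl⟩ : ∃ i ∈ I, i.castSucc = a ∧ Fin.last n = b := by
      simpa [newEntries] using hab
    exact hI i hi
  · exact hagree a b hab

end Extension

section Probability

variable {n' n : ℕ} (M : Matrix (Fin n') (Fin n') ℝ) (P : Matrix (Fin n) (Fin n) ℝ → Prop)

lemma probExt_not : probExt n M (fun N => ¬ P N) = 1 - probExt n M P := by
  classical
  rw [eq_sub_iff_add_eq', probExt, probExt, ← add_div, div_eq_one_iff_eq (by positivity),
    ← Nat.cast_add, card_filter_add_card_filter_not]
  simp [← pow_mul]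

variable {M P}

lemma probExt_le_half_pow_card (J : Finset (Fin n × Fin n))
    (hP : ∀ ω ω', P (extSym n M ω) → P (extSym n M ω') →
      (∀ a b, (a, b) ∉ J → ω a b = ω' a b) → ω = ω') :
    probExt n M P ≤ (1 / 2 : ℝ) ^ #J := by
  classical
  let S : Finset (Fin n → Fin n → Bool) := univ.filter fun ω => P (extSym n M ω)
  have hcard : #S * 2 ^ #J ≤ 2 ^ (n * n) := by
    simpa using card_mul_card_pow_le_of_eqOn_compl
      (S.map (Equiv.curry (Fin n) (Fin n) Bool).symm.toEmbedding) J fun f hf g hg hfg =>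
        (Equiv.curry (Fin n) (Fin n) Bool).injective <|
          hP _ _ (by simpa [S] using hf) (by simpa [S] using hg) fun _ _ hab => hfg hab
  rw [probExt, one_div_pow, div_le_div_iff₀ (by positivity) (by positivity), one_mul]
  exact_mod_cast hcard

end Probability

theorem simple_augment_general (n : ℕ) (M : Matrix (Fin n) (Fin n) ℝ) (A B : Finset (Fin n))
    (lam : ℝ) (hheavy : lam ≤ |permOn M A B|) (I : Finset (Fin n)) (hIB : Disjoint I B) :
    1 - (1 / 2 : ℝ) ^ I.card ≤
      probExt (n + 1) M fun M' => ∃ i ∈ I,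
        lam ≤ |permOn M'
          (insert (Fin.last n) (A.map Fin.castSuccEmb))
          (insert (Fin.castSucc i) (B.map Fin.castSuccEmb))| := by
  rw [sub_le_comm, ← probExt_not, ← card_newEntries I]
  refine probExt_le_half_pow_card (newEntries I) fun ω ω' hω hω' => ?_
  push Not at hω hω'
  exact eq_of_forall_abs_borderedPerm_lt hheavy hIB hω hω'

/-- Growing a heavy submatrix by one row and one column: if `M[A,B]` is `λ`-heavy
(`|A| = |B|`) and `I` is a nonempty set of column indices disjoint from `B`, then after
appending a random symmetric row and column to the symmetric `±1` matrix `M`, with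
probability at least `1 - 2^(-|I|)` there is some `i ∈ I` such that
`M_n[A ∪ {n}, B ∪ {i}]` is `λ`-heavy. -/
theorem simple_augment (n : ℕ) (M : Matrix (Fin n) (Fin n) ℝ) (hsym : M.IsSymm)
    (hsign : ∀ i j, M i j = 1 ∨ M i j = -1)
    (A B : Finset (Fin n)) (hAB : A.card = B.card) (lam : ℝ) (hlam : 0 < lam)
    (hheavy : lam ≤ |permOn M A B|)
    (I : Finset (Fin n)) (hI : I.Nonempty) (hIB : Disjoint I B) :
    1 - (1 / 2 : ℝ) ^ I.card ≤
      probExt (n + 1) M fun M' => ∃ i ∈ I,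
        lam ≤ |permOn M'
          (insert (Fin.last n) (A.map Fin.castSuccEmb))
          (insert (Fin.castSucc i) (B.map Fin.castSuccEmb))| :=
  simple_augment_general n M A B lam hheavy I hIB
end
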